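/- Let ρ_RQE be a state on H_R⊗H_Q⊗H_E (all finite-dimensional) with I(R;E|Q)_ρ = 0, and let 𝒮 = 𝒮_QE(ρ_RQE) be its steered family. Then for all finite-dimensional H_{Q'}, H_{E'} and every isometry V : H_Q⊗H_E → H_{Q'}⊗H_{E'}, there exists a CPTP map 𝓔 : L(H_Q) → L(H_{Q'}) such that Tr_{E'}[V ω_QE V†] = 𝓔(Tr_E[ω_QE]) for every ω_QE ∈ 𝒮. -/

import Mathlib

open Matrix Kronecker ComplexOrder

noncomputable section

/-- Von Neumann entropy `S(ρ) = -Tr[ρ log ρ]`, computed from the eigenvalues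
(junk value `0` if `ρ` is not Hermitian). -/
def vnEntropy {n : Type*} [Fintype n] [DecidableEq n] (ρ : Matrix n n ℂ) : ℝ :=
  if h : ρ.IsHermitian then ∑ i, Real.negMulLog (h.eigenvalues i) else 0

/-- Partial trace over the first tensor factor. -/
def ptraceLeft {A B : Type*} [Fintype A] (M : Matrix (A × B) (A × B) ℂ) : Matrix B B ℂ :=
  Matrix.of fun x y => ∑ a, M (a, x) (a, y)

/-- Partial trace over the second tensor factor. -/
def ptraceRight {A B : Type*} [Fintype B] (M : Matrix (A × B) (A × B) ℂ) : Matrix A A ℂ :=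
  Matrix.of fun x y => ∑ b, M (x, b) (y, b)

/-- Partial trace over the last factor of a tripartite operator on `R ⊗ Q ⊗ E`. -/
def ptrace3E {R Q E : Type*} [Fintype E] (M : Matrix (R × Q × E) (R × Q × E) ℂ) :
    Matrix (R × Q) (R × Q) ℂ :=
  Matrix.of fun x y => ∑ e, M (x.1, x.2, e) (y.1, y.2, e)

/-- A state is a positive semidefinite operator with unit trace. -/
def IsState {n : Type*} [Fintype n] (ρ : Matrix n n ℂ) : Prop :=
  ρ.PosSemidef ∧ ρ.trace = 1

/-- Quantum mutual information `I(A;B) = S(ρ_A) + S(ρ_B) - S(ρ_AB)`. -/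
def mutualInfo {A B : Type*} [Fintype A] [DecidableEq A] [Fintype B] [DecidableEq B]
    (ρ : Matrix (A × B) (A × B) ℂ) : ℝ :=
  vnEntropy (ptraceRight ρ) + vnEntropy (ptraceLeft ρ) - vnEntropy ρ

/-- Conditional quantum mutual information
`I(R;E|Q) = S(ρ_RQ) + S(ρ_QE) - S(ρ_RQE) - S(ρ_Q)`. -/
def condMutualInfo {R Q E : Type*} [Fintype R] [DecidableEq R] [Fintype Q] [DecidableEq Q]
    [Fintype E] [DecidableEq E] (ρ : Matrix (R × Q × E) (R × Q × E) ℂ) : ℝ :=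
  vnEntropy (ptrace3E ρ) + vnEntropy (ptraceLeft ρ) - vnEntropy ρ
    - vnEntropy (ptraceLeft (ptrace3E ρ))

/-- The map `id_n ⊗ Φ` obtained by applying `Φ` blockwise. -/
def idTensor {A B : Type*} (n : Type*) (Φ : Matrix A A ℂ →ₗ[ℂ] Matrix B B ℂ)
    (M : Matrix (n × A) (n × A) ℂ) : Matrix (n × B) (n × B) ℂ :=
  Matrix.of fun x y => Φ (Matrix.of fun a b => M (x.1, a) (y.1, b)) x.2 y.2

/-- Complete positivity: for every `k`, `id_{Fin k} ⊗ Φ` preserves positive semidefiniteness. -/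
def IsCPMap {A B : Type*} [Fintype A] [Fintype B]
    (Φ : Matrix A A ℂ →ₗ[ℂ] Matrix B B ℂ) : Prop :=
  ∀ (k : ℕ) (M : Matrix (Fin k × A) (Fin k × A) ℂ), M.PosSemidef →
    (idTensor (Fin k) Φ M).PosSemidef

/-- A CPTP map (quantum channel). -/
def IsCPTP {A B : Type*} [Fintype A] [Fintype B]
    (Φ : Matrix A A ℂ →ₗ[ℂ] Matrix B B ℂ) : Prop :=
  IsCPMap Φ ∧ ∀ M : Matrix A A ℂ, (Φ M).trace = M.trace

/-- The family of states on `Q ⊗ E` steered from `R` by measurements on a tripartite state. -/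
def steered {R Q E : Type*} [Fintype R] [Fintype Q] [DecidableEq Q] [Fintype E] [DecidableEq E]
    (ρ : Matrix (R × Q × E) (R × Q × E) ℂ) : Set (Matrix (Q × E) (Q × E) ℂ) :=
  { ω | ∃ P : Matrix R R ℂ, P.PosSemidef ∧
      (ptraceLeft ((P ⊗ₖ (1 : Matrix (Q × E) (Q × E) ℂ)) * ρ)).trace ≠ 0 ∧
      ω = ((ptraceLeft ((P ⊗ₖ (1 : Matrix (Q × E) (Q × E) ℂ)) * ρ)).trace)⁻¹ •
            ptraceLeft ((P ⊗ₖ (1 : Matrix (Q × E) (Q × E) ℂ)) * ρ) }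

/-- A post-selected family of bipartite system-environment states: the normalized
output state space of some completely positive map `𝒫 : Q₀E₀ → QE`. -/
def IsPostSelected {Q E : Type*} [Fintype Q] [Fintype E]
    (S : Set (Matrix (Q × E) (Q × E) ℂ)) : Prop :=
  ∃ (n0 m0 : ℕ)
    (P : Matrix (Fin n0 × Fin m0) (Fin n0 × Fin m0) ℂ →ₗ[ℂ] Matrix (Q × E) (Q × E) ℂ),
    IsCPMap P ∧
    S = { ω | ∃ ρ0, IsState ρ0 ∧ (P ρ0).trace ≠ 0 ∧ ω = ((P ρ0).trace)⁻¹ • P ρ0 }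

open Filter Topology

/-- Every function on a finite set of nonnegative reals is a combination of resolvents. -/
lemma exists_resolvent_interpolation (Λ : Finset ℝ) (hΛ : ∀ x ∈ Λ, 0 ≤ x) (g : ℝ → ℝ) :
    ∃ a : ℝ → ℝ, ∀ x ∈ Λ, ∑ t ∈ Λ, a t * (x + (t + 1))⁻¹ = g x := by
  set v : ℝ → ℝ := fun t => -(t + 1) with hv
  have hvinj : Set.InjOn v Λ := fun a _ b _ h => by simpa [hv] using h
  set D := Lagrange.nodal Λ v with hD
  set N := Lagrange.interpolate Λ id (fun x => g x * D.eval x) with hN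
  have hdeg : N.degree < Λ.card := Lagrange.degree_interpolate_lt _ (Set.injOn_id _)
  have hN' := Lagrange.eq_interpolate hvinj hdeg
  refine ⟨fun t => Lagrange.nodalWeight Λ v t * N.eval (v t), fun x hx => ?_⟩
  have hne : ∀ t ∈ Λ, x ≠ v t := fun t ht => by
    have := hΛ t ht; have := hΛ x hx; simp only [hv]; intro h; linarith
  have h1 : N.eval x = g x * D.eval x := by
    have := Lagrange.eval_interpolate_at_node (fun x => g x * D.eval x)
      (Set.injOn_id (Λ : Set ℝ)) hx
    exact this
  have h2 := Lagrange.eval_interpolate_not_at_node (fun i => N.eval (v i)) hne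
  rw [← hN', h1, mul_comm] at h2
  have h3 : D.eval x ≠ 0 := by
    rw [hD, Lagrange.eval_nodal]
    exact Finset.prod_ne_zero_iff.2 fun t ht => sub_ne_zero.2 (hne t ht)
  rw [mul_left_cancel₀ h3 h2]
  refine Finset.sum_congr rfl fun t _ => ?_
  simp only [hv, sub_neg_eq_add]; ring

/-- A signed sum of logarithms `∑ aₖ log (sₖ + t pₖ)` which is nondecreasing on `t > 0` and takes
the same value at both ends has vanishing derivative. -/
lemma sum_div_eq_zero_of_log_balance {K : Type*} [Fintype K] (a p s : K → ℝ)
    (hp : ∀ k, a k ≠ 0 → 0 < p k) (hs : ∀ k, a k ≠ 0 → 0 < s k) (hsum : ∑ k, a k = 0)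
    (hlog : ∑ k, a k * Real.log (p k) = ∑ k, a k * Real.log (s k))
    (hnn : ∀ t, 0 < t → 0 ≤ ∑ k, a k * (p k / (s k + t * p k))) :
    ∀ t, 0 < t → ∑ k, a k * (p k / (s k + t * p k)) = 0 := by
  set F : ℝ → ℝ := fun t => ∑ k, a k * Real.log (s k + t * p k) with hF
  have hder : ∀ t, 0 ≤ t → HasDerivAt F (∑ k, a k * (p k / (s k + t * p k))) t := by
    intro t ht
    refine HasDerivAt.fun_sum fun k _ => ?_
    by_cases ha : a k = 0
    · simpa [ha] using hasDerivAt_const t (0 : ℝ)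
    · have h1 := hp k ha
      have h2 := hs k ha
      have h3 : HasDerivAt (fun t => s k + t * p k) (p k) t := by
        simpa using ((hasDerivAt_id t).mul_const (p k)).const_add (s k)
      exact (h3.log (by positivity)).const_mul (a k)
  have hmono : MonotoneOn F (Set.Ici 0) := by
    refine monotoneOn_of_deriv_nonneg (convex_Ici 0)
      (fun t ht => (hder t ht).continuousAt.continuousWithinAt) ?_ ?_
    · intro t ht
      rw [interior_Ici] at ht
      exact (hder t (le_of_lt ht)).differentiableAt.differentiableWithinAt
    · intro t ht
      rw [interior_Ici] at ht
      rw [(hder t (le_of_lt ht)).deriv]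
      exact hnn t ht
  have hF0 : F 0 = ∑ k, a k * Real.log (s k) := by simp [hF]
  have hFinf : Tendsto F atTop (𝓝 (F 0)) := by
    rw [hF0, ← hlog]
    have : Tendsto (fun t : ℝ => ∑ k, a k * Real.log (s k * t⁻¹ + p k)) atTop
        (𝓝 (∑ k, a k * Real.log (p k))) := by
      refine tendsto_finsetSum _ fun k _ => ?_
      by_cases ha : a k = 0
      · simp [ha]
      · have h : Tendsto (fun t : ℝ => s k * t⁻¹ + p k) atTop (𝓝 (p k)) := by
          simpa using (tendsto_inv_atTop_zero.const_mul (s k)).add_const (p k)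
        exact (h.log (hp k ha).ne').const_mul _
    refine this.congr' ?_
    filter_upwards [eventually_gt_atTop 0] with t ht
    have : ∀ k, a k * Real.log (s k + t * p k)
        = a k * Real.log (s k * t⁻¹ + p k) + a k * Real.log t := by
      intro k
      by_cases ha : a k = 0
      · simp [ha]
      · have h1 := hp k ha
        have h2 := hs k ha
        rw [← mul_add, ← Real.log_mul (by positivity) (by positivity)]
        congr 2
        field_simp
    simp only [hF]
    rw [Finset.sum_congr rfl fun k _ => this k, Finset.sum_add_distrib, ← Finset.sum_mul, hsum]
    simp
  have hconst : ∀ t, 0 ≤ t → F t = F 0 := by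
    intro t ht
    refine le_antisymm ?_ (hmono Set.self_mem_Ici ht ht)
    refine ge_of_tendsto hFinf ?_
    filter_upwards [eventually_ge_atTop t] with u hu
    exact hmono ht (le_trans ht hu) hu
  intro t ht
  have h0 : HasDerivAt F 0 t := by
    refine (hasDerivAt_const t (F 0)).congr_of_eventuallyEq ?_
    filter_upwards [lt_mem_nhds ht] with u hu
    exact hconst u hu.le
  exact (hder t ht.le).unique h0

section Spectral

variable {n : Type*} [Fintype n]

/-- The matrix whose coefficients between the bases `U` and `W` are those of the identity
multiplied entrywise by `h`. -/
def schurMat (W U : Matrix n n ℂ) (h : n → n → ℝ) : Matrix n n ℂ :=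
  W * Matrix.of (fun j i => (Wᴴ * U) j i * (h j i : ℂ)) * Uᴴ

lemma schurMat_congr (W U : Matrix n n ℂ) {h h' : n → n → ℝ}
    (hh : ∀ j i, (Wᴴ * U) j i ≠ 0 → h j i = h' j i) : schurMat W U h = schurMat W U h' := by
  have : (Matrix.of fun j i => (Wᴴ * U) j i * (h j i : ℂ))
      = Matrix.of fun j i => (Wᴴ * U) j i * (h' j i : ℂ) := by
    ext j i
    by_cases hc : (Wᴴ * U) j i = 0
    · simp [hc]
    · simp [hh j i hc]
  rw [schurMat, schurMat, this]

lemma schurMat_add (W U : Matrix n n ℂ) (h h' : n → n → ℝ) :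
    schurMat W U h + schurMat W U h' = schurMat W U (fun j i => h j i + h' j i) := by
  simp only [schurMat, ← Matrix.add_mul, ← Matrix.mul_add]
  congr 2
  ext j i
  simp [mul_add]

lemma smul_schurMat (W U : Matrix n n ℂ) (t : ℝ) (h : n → n → ℝ) :
    (t : ℂ) • schurMat W U h = schurMat W U (fun j i => t * h j i) := by
  rw [schurMat, schurMat, ← Matrix.smul_mul, ← Matrix.mul_smul]
  congr 2
  ext j i
  simp
  ring

lemma sum_schurMat (W U : Matrix n n ℂ) {κ : Type*} (S : Finset κ) (h : κ → n → n → ℝ) :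
    ∑ k ∈ S, schurMat W U (h k) = schurMat W U (fun j i => ∑ k ∈ S, h k j i) := by
  simp only [schurMat, ← Matrix.sum_mul, ← Matrix.mul_sum]
  congr 2
  ext j i
  simp [Matrix.sum_apply, Finset.mul_sum]

variable [DecidableEq n]

/-- The matrix with eigenvector matrix `U` and real eigenvalues `f`. -/
def spectralMat (U : Matrix n n ℂ) (f : n → ℝ) : Matrix n n ℂ :=
  U * diagonal (fun i => (f i : ℂ)) * Uᴴ

lemma conjTranspose_spectralMat (U : Matrix n n ℂ) (f : n → ℝ) :
    (spectralMat U f)ᴴ = spectralMat U f := by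
  simp [spectralMat, Matrix.mul_assoc, diagonal_conjTranspose, Pi.star_def]

lemma spectralMat_mul {U : Matrix n n ℂ} (hU : Uᴴ * U = 1) (f g : n → ℝ) :
    spectralMat U f * spectralMat U g = spectralMat U (fun i => f i * g i) := by
  simp only [spectralMat]
  rw [show U * diagonal (fun i => (f i : ℂ)) * Uᴴ * (U * diagonal (fun i => (g i : ℂ)) * Uᴴ)
    = U * (diagonal (fun i => (f i : ℂ)) * (Uᴴ * U) * diagonal (fun i => (g i : ℂ))) * Uᴴ by
      simp only [Matrix.mul_assoc], hU]
  simp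

lemma spectralMat_one {U : Matrix n n ℂ} (hU : Uᴴ * U = 1) :
    spectralMat U (fun _ => 1) = 1 := by
  have := mul_eq_one_comm.1 hU
  simp [spectralMat, this]

lemma trace_spectralMat {U : Matrix n n ℂ} (hU : Uᴴ * U = 1) (f : n → ℝ) :
    (spectralMat U f).trace = ((∑ i, f i : ℝ) : ℂ) := by
  rw [spectralMat, Matrix.trace_mul_comm, ← Matrix.mul_assoc, hU, Matrix.one_mul]
  simp [Matrix.trace]

lemma spectralMat_mul_schurMat {W : Matrix n n ℂ} (hW : Wᴴ * W = 1) (U : Matrix n n ℂ)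
    (a : n → ℝ) (h : n → n → ℝ) :
    spectralMat W a * schurMat W U h = schurMat W U (fun j i => a j * h j i) := by
  simp only [spectralMat, schurMat]
  rw [Matrix.mul_assoc, ← Matrix.mul_assoc Wᴴ, ← Matrix.mul_assoc Wᴴ, hW, Matrix.one_mul,
    ← Matrix.mul_assoc, Matrix.mul_assoc W]
  congr 2
  ext j i
  simp [Matrix.diagonal_mul]
  ring

lemma schurMat_mul_spectralMat (W : Matrix n n ℂ) {U : Matrix n n ℂ} (hU : Uᴴ * U = 1)
    (h : n → n → ℝ) (b : n → ℝ) :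
    schurMat W U h * spectralMat U b = schurMat W U (fun j i => h j i * b i) := by
  simp only [spectralMat, schurMat]
  rw [Matrix.mul_assoc, ← Matrix.mul_assoc Uᴴ, ← Matrix.mul_assoc Uᴴ, hU, Matrix.one_mul,
    ← Matrix.mul_assoc, Matrix.mul_assoc W]
  congr 2
  ext j i
  simp [Matrix.mul_diagonal, mul_assoc]

lemma schurMat_one {W U : Matrix n n ℂ} (hW : Wᴴ * W = 1) (hU : Uᴴ * U = 1) :
    schurMat W U (fun _ _ => 1) = 1 := by
  have hW' := mul_eq_one_comm.1 hW
  have hU' := mul_eq_one_comm.1 hU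
  have : (Matrix.of fun j i => (Wᴴ * U) j i * ((1 : ℝ) : ℂ)) = Wᴴ * U := by
    ext j i; simp
  rw [schurMat, this, ← Matrix.mul_assoc, hW', Matrix.one_mul, hU']

lemma schurMat_right {W U : Matrix n n ℂ} (hW : Wᴴ * W = 1) (hU : Uᴴ * U = 1) (b : n → ℝ) :
    schurMat W U (fun _ i => b i) = spectralMat U b := by
  have := schurMat_mul_spectralMat W hU (fun _ _ => 1) b
  rw [schurMat_one hW hU, Matrix.one_mul] at this
  simpa using this.symm

lemma schurMat_mul {W U : Matrix n n ℂ} (hW : Wᴴ * W = 1) (hU : Uᴴ * U = 1) (a b : n → ℝ) :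
    schurMat W U (fun j i => a j * b i) = spectralMat W a * spectralMat U b := by
  rw [← schurMat_right hW hU, spectralMat_mul_schurMat hW]

lemma trace_schurMat_mul_spectralMat {W U : Matrix n n ℂ} (hU : Uᴴ * U = 1)
    (h : n → n → ℝ) (p : n → ℝ) :
    ((schurMat W U h)ᴴ * spectralMat U p).trace
      = ((∑ j, ∑ i, ‖(Wᴴ * U) j i‖ ^ 2 * (h j i * p i) : ℝ) : ℂ) := by
  have h1 : (schurMat W U h)ᴴ * spectralMat U p
      = U * ((Matrix.of (fun j i => (Wᴴ * U) j i * (h j i : ℂ)))ᴴ * (Wᴴ * U)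
        * diagonal (fun i => (p i : ℂ))) * Uᴴ := by
    simp [schurMat, spectralMat, Matrix.mul_assoc]
  rw [h1, Matrix.trace_mul_comm, ← Matrix.mul_assoc, hU, Matrix.one_mul]
  simp only [Matrix.trace, Matrix.diag_apply, Matrix.mul_diagonal]
  push_cast
  rw [Finset.sum_comm]
  refine Finset.sum_congr rfl fun i _ => ?_
  rw [Matrix.mul_apply, Finset.sum_mul]
  refine Finset.sum_congr rfl fun j _ => ?_
  simp only [Matrix.conjTranspose_apply, Matrix.of_apply, star_mul', Complex.star_def,
    Complex.conj_ofReal]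
  rw [← Complex.conj_mul']
  ring

lemma spectralMat_eq_sqrt_mul_sqrt {U : Matrix n n ℂ} (hU : Uᴴ * U = 1) {p : n → ℝ}
    (hp : ∀ i, 0 ≤ p i) :
    spectralMat U p = spectralMat U (fun i => √(p i)) * spectralMat U (fun i => √(p i)) := by
  rw [spectralMat_mul hU]
  congr 1
  ext i
  exact (Real.mul_self_sqrt (hp i)).symm

lemma trace_conjTranspose_mul_spectralMat_mul {U : Matrix n n ℂ} (hU : Uᴴ * U = 1) {p : n → ℝ}
    (hp : ∀ i, 0 ≤ p i) (Z : Matrix n n ℂ) : 0 ≤ (Zᴴ * spectralMat U p * Z).trace := by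
  have : Zᴴ * spectralMat U p * Z
      = (spectralMat U (fun i => √(p i)) * Z)ᴴ * (spectralMat U (fun i => √(p i)) * Z) := by
    rw [spectralMat_eq_sqrt_mul_sqrt hU hp, conjTranspose_mul, conjTranspose_spectralMat]
    simp only [Matrix.mul_assoc]
  rw [this]
  exact (posSemidef_conjTranspose_mul_self _).trace_nonneg

lemma mul_spectralMat_eq_zero_of_trace {U : Matrix n n ℂ} (hU : Uᴴ * U = 1) {p : n → ℝ}
    (hp : ∀ i, 0 ≤ p i) {Z : Matrix n n ℂ} (h : (Z * spectralMat U p * Zᴴ).trace = 0) :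
    Z * spectralMat U p = 0 := by
  have : Z * spectralMat U p * Zᴴ
      = (Z * spectralMat U (fun i => √(p i))) * (Z * spectralMat U (fun i => √(p i)))ᴴ := by
    rw [spectralMat_eq_sqrt_mul_sqrt hU hp, conjTranspose_mul, conjTranspose_spectralMat]
    simp only [Matrix.mul_assoc]
  rw [this, trace_mul_conjTranspose_self_eq_zero_iff] at h
  rw [spectralMat_eq_sqrt_mul_sqrt hU hp, ← Matrix.mul_assoc, h, Matrix.zero_mul]

/-- The solution `X = schurMat W U (p / (s + t p))` of `σ X + t X ρ = ρ`. -/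
lemma spectralMat_mul_resolvent {W U : Matrix n n ℂ} (hW : Wᴴ * W = 1) (hU : Uᴴ * U = 1)
    {s p : n → ℝ} (hs : ∀ j, 0 ≤ s j) (hp : ∀ i, 0 ≤ p i) {t : ℝ} (ht : 0 < t) :
    spectralMat W s * schurMat W U (fun j i => p i / (s j + t * p i))
      + (t : ℂ) • (schurMat W U (fun j i => p i / (s j + t * p i)) * spectralMat U p)
      = spectralMat U p := by
  rw [spectralMat_mul_schurMat hW, schurMat_mul_spectralMat W hU, smul_schurMat, schurMat_add,
    ← schurMat_right hW hU]
  refine schurMat_congr _ _ fun j i _ => ?_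
  rcases (hp i).eq_or_lt with h | h
  · simp [← h]
  · have := hs j
    have : s j + t * p i ≠ 0 := by positivity
    field_simp

end Spectral

section Equality

lemma eq_of_mul_projection_eq {n : Type*} [Fintype n] {T S P : Matrix n n ℂ} (hPP : P * P = P)
    (hPH : Pᴴ = P) (hTP : T * P = S) (htr : (T * Tᴴ).trace = (S * Sᴴ).trace) : T = S := by
  have h1 : T * Sᴴ = S * Sᴴ := by
    rw [← hTP, conjTranspose_mul, hPH, Matrix.mul_assoc T P, ← Matrix.mul_assoc P, hPP]
  have h2 : S * Tᴴ = S * Sᴴ := by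
    simpa using congrArg conjTranspose h1
  have h0 : (T - S) * (T - S)ᴴ = T * Tᴴ - S * Sᴴ := by
    rw [conjTranspose_sub, Matrix.sub_mul, Matrix.mul_sub, Matrix.mul_sub, h1, h2]
    abel
  have h3 : ((T - S) * (T - S)ᴴ).trace = 0 := by
    rw [h0, trace_sub, htr, sub_self]
  exact sub_eq_zero.1 (trace_mul_conjTranspose_self_eq_zero_iff.1 h3)

variable {N A : Type*} [Fintype N] [DecidableEq N] [Fintype A] [DecidableEq A]
  {U W : Matrix N N ℂ} {U' W' : Matrix A A ℂ} {p s : N → ℝ} {p' s' : A → ℝ}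

/-- The defect in the monotonicity of the resolvent functional
`⟨ρ, (L_σ + t R_ρ)⁻¹ ρ⟩` under restriction along `ι`. -/
lemma resolvent_defect (ι : Matrix A A ℂ →⋆ₐ[ℂ] Matrix N N ℂ)
    (hU : Uᴴ * U = 1) (hW : Wᴴ * W = 1) (hU' : U'ᴴ * U' = 1) (hW' : W'ᴴ * W' = 1)
    (hp : ∀ i, 0 ≤ p i) (hs : ∀ i, 0 ≤ s i) (hp' : ∀ i, 0 ≤ p' i) (hs' : ∀ i, 0 ≤ s' i)
    (hρ : ∀ X, (ι X * spectralMat U p).trace = (X * spectralMat U' p').trace)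
    (hσ : ∀ X, (ι X * spectralMat W s).trace = (X * spectralMat W' s').trace)
    {t : ℝ} (ht : 0 < t) {Z : Matrix N N ℂ}
    (hZ : Z = ι (schurMat W' U' (fun j i => p' i / (s' j + t * p' i)))
      - schurMat W U (fun j i => p i / (s j + t * p i))) :
    (Zᴴ * spectralMat W s * Z).trace + (t : ℂ) * (Z * spectralMat U p * Zᴴ).trace
      = ((∑ j, ∑ i, ‖(Wᴴ * U) j i‖ ^ 2 * (p i / (s j + t * p i) * p i)
        - ∑ j, ∑ i, ‖(W'ᴴ * U') j i‖ ^ 2 * (p' i / (s' j + t * p' i) * p' i) : ℝ) : ℂ) := by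
  have hX := spectralMat_mul_resolvent hW hU hs hp ht
  have hX' := spectralMat_mul_resolvent hW' hU' hs' hp' ht
  have hf := trace_schurMat_mul_spectralMat (W := W) hU (fun j i => p i / (s j + t * p i)) p
  have hf' := trace_schurMat_mul_spectralMat (W := W') hU'
    (fun j i => p' i / (s' j + t * p' i)) p'
  rw [Complex.ofReal_sub, ← hf, ← hf']
  have hreal' : star ((schurMat W' U' (fun j i => p' i / (s' j + t * p' i)))ᴴ
      * spectralMat U' p').trace = ((schurMat W' U' (fun j i => p' i / (s' j + t * p' i)))ᴴ
      * spectralMat U' p').trace := by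
    rw [hf']; simp
  clear hf hf'
  set X := schurMat W U (fun j i => p i / (s j + t * p i)) with hXdef
  set X' := schurMat W' U' (fun j i => p' i / (s' j + t * p' i)) with hXdef'
  set ρ := spectralMat U p with hρdef
  set σ := spectralMat W s with hσdef
  set ρ' := spectralMat U' p' with hρdef'
  set σ' := spectralMat W' s' with hσdef'
  have hρH : ρᴴ = ρ := conjTranspose_spectralMat _ _
  have hσH : σᴴ = σ := conjTranspose_spectralMat _ _
  have hιH : ∀ M, (ι M)ᴴ = ι Mᴴ := fun M => (map_star ι M).symm
  have e1 : ((ι X')ᴴ * (σ * ι X' + (t : ℂ) • (ι X' * ρ))).trace = (X'ᴴ * ρ').trace := by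
    rw [← hX', Matrix.mul_add, Matrix.mul_add, trace_add, trace_add, Matrix.mul_smul,
      Matrix.mul_smul, trace_smul, trace_smul, ← Matrix.mul_assoc (ι X')ᴴ (ι X'),
      ← Matrix.mul_assoc X'ᴴ X', hιH, ← map_mul, hρ, Matrix.trace_mul_comm, Matrix.mul_assoc,
      ← map_mul, Matrix.trace_mul_comm, hσ, Matrix.trace_mul_comm X'ᴴ, Matrix.mul_assoc,
      Matrix.trace_mul_comm, Matrix.mul_assoc, Matrix.trace_mul_comm X'ᴴ]
  have e2 : ((ι X')ᴴ * ρ).trace = (X'ᴴ * ρ').trace := by rw [hιH, hρ]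
  have e3 : (Xᴴ * (σ * ι X' + (t : ℂ) • (ι X' * ρ))).trace = (X'ᴴ * ρ').trace := by
    have h1 : (Xᴴ * (σ * ι X' + (t : ℂ) • (ι X' * ρ))).trace
        = ((σ * X + (t : ℂ) • (X * ρ))ᴴ * ι X').trace := by
      rw [conjTranspose_add, conjTranspose_smul, conjTranspose_mul, conjTranspose_mul, hρH, hσH,
        Matrix.mul_add, Matrix.add_mul, trace_add, trace_add, Matrix.mul_smul, Matrix.smul_mul,
        trace_smul, trace_smul, Matrix.mul_assoc, ← Matrix.mul_assoc Xᴴ (ι X') ρ,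
        Matrix.trace_mul_comm _ ρ, Matrix.mul_assoc ρ]
      simp
    rw [h1, hX, hρH, ← hreal', ← e2, ← trace_conjTranspose, conjTranspose_mul,
      conjTranspose_conjTranspose, hρH]
  have e4 : (Zᴴ * σ * Z).trace + (t : ℂ) * (Z * ρ * Zᴴ).trace
      = (Zᴴ * (σ * Z + (t : ℂ) • (Z * ρ))).trace := by
    rw [Matrix.mul_add, trace_add, Matrix.mul_smul, trace_smul, Matrix.mul_assoc,
      Matrix.trace_mul_comm (Z * ρ), smul_eq_mul]
  have e5 : σ * Z + (t : ℂ) • (Z * ρ) = (σ * ι X' + (t : ℂ) • (ι X' * ρ)) - ρ := by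
    calc σ * Z + (t : ℂ) • (Z * ρ)
        = (σ * ι X' + (t : ℂ) • (ι X' * ρ)) - (σ * X + (t : ℂ) • (X * ρ)) := by
          rw [hZ, Matrix.mul_sub, Matrix.sub_mul, smul_sub]
          abel
      _ = _ := by rw [hX]
  rw [e4, e5, hZ, conjTranspose_sub, Matrix.sub_mul, Matrix.mul_sub, Matrix.mul_sub, trace_sub,
    trace_sub, trace_sub, e1, e2, e3]
  ring

/-- Equality in the monotonicity of relative entropy, at the level of resolvents. -/
lemma resolvent_mul_eq_of_relEntropy_eq (ι : Matrix A A ℂ →⋆ₐ[ℂ] Matrix N N ℂ)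
    (hU : Uᴴ * U = 1) (hW : Wᴴ * W = 1) (hU' : U'ᴴ * U' = 1) (hW' : W'ᴴ * W' = 1)
    (hp : ∀ i, 0 ≤ p i) (hs : ∀ i, 0 ≤ s i) (hp' : ∀ i, 0 ≤ p' i) (hs' : ∀ i, 0 ≤ s' i)
    (hρ : ∀ X, (ι X * spectralMat U p).trace = (X * spectralMat U' p').trace)
    (hσ : ∀ X, (ι X * spectralMat W s).trace = (X * spectralMat W' s').trace)
    (hsupp : ∀ j i, (Wᴴ * U) j i ≠ 0 → p i ≠ 0 → s j ≠ 0)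
    (hsupp' : ∀ j i, (W'ᴴ * U') j i ≠ 0 → p' i ≠ 0 → s' j ≠ 0)
    (hD : ∑ j, ∑ i, ‖(Wᴴ * U) j i‖ ^ 2 * p i * (Real.log (p i) - Real.log (s j))
      = ∑ j, ∑ i, ‖(W'ᴴ * U') j i‖ ^ 2 * p' i * (Real.log (p' i) - Real.log (s' j)))
    {t : ℝ} (ht : 0 < t) :
    ι (schurMat W' U' (fun j i => p' i / (s' j + t * p' i))) * spectralMat U p
      = schurMat W U (fun j i => p i / (s j + t * p i)) * spectralMat U p := by
  set a : (N × N) ⊕ (A × A) → ℝ := Sum.elim (fun x => ‖(Wᴴ * U) x.1 x.2‖ ^ 2 * p x.2)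
    (fun x => -(‖(W'ᴴ * U') x.1 x.2‖ ^ 2 * p' x.2)) with ha
  set b : (N × N) ⊕ (A × A) → ℝ := Sum.elim (fun x => p x.2) (fun x => p' x.2) with hb
  set c : (N × N) ⊕ (A × A) → ℝ := Sum.elim (fun x => s x.1) (fun x => s' x.1) with hc
  have hderiv : ∀ t, ∑ k, a k * (b k / (c k + t * b k))
      = ∑ j, ∑ i, ‖(Wᴴ * U) j i‖ ^ 2 * (p i / (s j + t * p i) * p i)
        - ∑ j, ∑ i, ‖(W'ᴴ * U') j i‖ ^ 2 * (p' i / (s' j + t * p' i) * p' i) := by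
    intro t
    rw [Fintype.sum_sum_type, Fintype.sum_prod_type, Fintype.sum_prod_type, sub_eq_add_neg,
      ← Finset.sum_neg_distrib]
    simp only [← Finset.sum_neg_distrib, ha, hb, hc, Sum.elim_inl, Sum.elim_inr]
    congr 1 <;> refine Finset.sum_congr rfl fun j _ => Finset.sum_congr rfl fun i _ => ?_ <;> ring
  have hpos1 : ∀ Z : Matrix N N ℂ, 0 ≤ (Zᴴ * spectralMat W s * Z).trace :=
    trace_conjTranspose_mul_spectralMat_mul hW hs
  have hpos2 : ∀ Z : Matrix N N ℂ, 0 ≤ (Z * spectralMat U p * Zᴴ).trace := fun Z => by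
    simpa using trace_conjTranspose_mul_spectralMat_mul hU hp Zᴴ
  have hbal := sum_div_eq_zero_of_log_balance a b c ?_ ?_ ?_ ?_ ?_ t ht
  · set Z := ι (schurMat W' U' (fun j i => p' i / (s' j + t * p' i)))
      - schurMat W U (fun j i => p i / (s j + t * p i)) with hZ
    have h := resolvent_defect ι hU hW hU' hW' hp hs hp' hs' hρ hσ ht hZ
    rw [← hderiv, hbal, Complex.ofReal_zero] at h
    have ht' : (0 : ℂ) < t := by exact_mod_cast ht
    have h2 := (add_eq_zero_iff_of_nonneg (hpos1 Z) (mul_nonneg ht'.le (hpos2 Z))).1 h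
    have h3 := mul_spectralMat_eq_zero_of_trace hU hp
      ((mul_eq_zero.1 h2.2).resolve_left ht'.ne')
    rwa [hZ, Matrix.sub_mul, sub_eq_zero] at h3
  · rintro (x | x) hx
    · simp only [ha, hb, Sum.elim_inl] at hx ⊢
      exact lt_of_le_of_ne (hp _) (Ne.symm (right_ne_zero_of_mul hx))
    · simp only [ha, hb, Sum.elim_inr, neg_ne_zero] at hx ⊢
      exact lt_of_le_of_ne (hp' _) (Ne.symm (right_ne_zero_of_mul hx))
  · rintro (x | x) hx
    · simp only [ha, hc, Sum.elim_inl] at hx ⊢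
      refine lt_of_le_of_ne (hs _) (Ne.symm (hsupp _ _ ?_ (right_ne_zero_of_mul hx)))
      simpa using left_ne_zero_of_mul hx
    · simp only [ha, hc, Sum.elim_inr, neg_ne_zero] at hx ⊢
      refine lt_of_le_of_ne (hs' _) (Ne.symm (hsupp' _ _ ?_ (right_ne_zero_of_mul hx)))
      simpa using left_ne_zero_of_mul hx
  · have h1 := trace_schurMat_mul_spectralMat (W := W) hU (fun _ _ => 1) p
    have h2 := trace_schurMat_mul_spectralMat (W := W') hU' (fun _ _ => 1) p'
    rw [schurMat_one hW hU] at h1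
    rw [schurMat_one hW' hU'] at h2
    have h3 := hρ 1
    rw [map_one] at h3
    rw [conjTranspose_one, h3] at h1
    rw [conjTranspose_one, h1] at h2
    have h4 := Complex.ofReal_injective h2
    simp only [one_mul] at h4
    rw [Fintype.sum_sum_type, Fintype.sum_prod_type, Fintype.sum_prod_type]
    simp only [ha, Sum.elim_inl, Sum.elim_inr, Finset.sum_neg_distrib]
    rw [h4, add_neg_cancel]
  · rw [← sub_eq_zero, ← Finset.sum_sub_distrib]
    simp only [← mul_sub]
    rw [Fintype.sum_sum_type, Fintype.sum_prod_type, Fintype.sum_prod_type]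
    simp only [ha, hb, hc, Sum.elim_inl, Sum.elim_inr, neg_mul, Finset.sum_neg_distrib]
    rw [hD, add_neg_cancel]
  · intro u hu
    have h := resolvent_defect ι hU hW hU' hW' hp hs hp' hs' hρ hσ hu rfl
    rw [← hderiv] at h
    have hu' : (0 : ℂ) ≤ u := by exact_mod_cast hu.le
    have h2 := add_nonneg (hpos1 _) (mul_nonneg hu' (hpos2 _)) |>.trans_eq h
    exact_mod_cast h2

/-- Equality in the monotonicity of relative entropy yields the square root intertwining relation
behind Petz recovery. -/
lemma sqrt_eq_of_relEntropy_eq (ι : Matrix A A ℂ →⋆ₐ[ℂ] Matrix N N ℂ)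
    (hU : Uᴴ * U = 1) (hW : Wᴴ * W = 1) (hU' : U'ᴴ * U' = 1) (hW' : W'ᴴ * W' = 1)
    (hp : ∀ i, 0 ≤ p i) (hs : ∀ i, 0 ≤ s i) (hp' : ∀ i, 0 ≤ p' i) (hs' : ∀ i, 0 ≤ s' i)
    (hρ : ∀ X, (ι X * spectralMat U p).trace = (X * spectralMat U' p').trace)
    (hσ : ∀ X, (ι X * spectralMat W s).trace = (X * spectralMat W' s').trace)
    (hsupp : ∀ j i, (Wᴴ * U) j i ≠ 0 → p i ≠ 0 → s j ≠ 0)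
    (hsupp' : ∀ j i, (W'ᴴ * U') j i ≠ 0 → p' i ≠ 0 → s' j ≠ 0)
    (hD : ∑ j, ∑ i, ‖(Wᴴ * U) j i‖ ^ 2 * p i * (Real.log (p i) - Real.log (s j))
      = ∑ j, ∑ i, ‖(W'ᴴ * U') j i‖ ^ 2 * p' i * (Real.log (p' i) - Real.log (s' j))) :
    spectralMat W (fun j => √(s j)) * ι (spectralMat W' (fun j => (√(s' j))⁻¹)
      * spectralMat U' (fun i => √(p' i))) = spectralMat U (fun i => √(p i)) := by
  classical
  set Λ : Finset ℝ := Finset.univ.image (fun x : N × N => s x.1 / p x.2)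
    ∪ Finset.univ.image (fun x : A × A => s' x.1 / p' x.2) with hΛ
  have hΛ0 : ∀ x ∈ Λ, 0 ≤ x := by
    intro x hx
    simp only [hΛ, Finset.mem_union, Finset.mem_image, Finset.mem_univ, true_and] at hx
    rcases hx with ⟨y, rfl⟩ | ⟨y, rfl⟩
    · exact div_nonneg (hs _) (hp _)
    · exact div_nonneg (hs' _) (hp' _)
  obtain ⟨a, ha⟩ := exists_resolvent_interpolation Λ hΛ0 (fun x => (√x)⁻¹)
  have hval : ∀ u v : ℝ, 0 ≤ u → 0 ≤ v → u / v ∈ Λ →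
      ∑ t ∈ Λ, a t * (v / (u + (t + 1) * v)) = (√u)⁻¹ * √v := by
    intro u v hu hv hmem
    rcases hv.eq_or_lt with h | h
    · simp [← h]
    · have h1 := ha _ hmem
      rw [Real.sqrt_div hu, inv_div] at h1
      rw [mul_comm, ← div_eq_mul_inv, ← h1]
      refine Finset.sum_congr rfl fun t _ => ?_
      congr 1
      rw [← inv_div]
      congr 1
      field_simp
  have hN : ∑ t ∈ Λ, (a t : ℂ) • schurMat W U (fun j i => p i / (s j + (t + 1) * p i))
      = spectralMat W (fun j => (√(s j))⁻¹) * spectralMat U (fun i => √(p i)) := by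
    simp only [smul_schurMat]
    rw [sum_schurMat, ← schurMat_mul hW hU]
    refine schurMat_congr _ _ fun j i _ => hval _ _ (hs j) (hp i) ?_
    exact Finset.mem_union_left _ (Finset.mem_image.2 ⟨(j, i), Finset.mem_univ _, rfl⟩)
  have hA : ∑ t ∈ Λ, (a t : ℂ) • schurMat W' U' (fun j i => p' i / (s' j + (t + 1) * p' i))
      = spectralMat W' (fun j => (√(s' j))⁻¹) * spectralMat U' (fun i => √(p' i)) := by
    simp only [smul_schurMat]
    rw [sum_schurMat, ← schurMat_mul hW' hU']
    refine schurMat_congr _ _ fun j i _ => hval _ _ (hs' j) (hp' i) ?_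
    exact Finset.mem_union_right _ (Finset.mem_image.2 ⟨(j, i), Finset.mem_univ _, rfl⟩)
  have hinter : ι (spectralMat W' (fun j => (√(s' j))⁻¹) * spectralMat U' (fun i => √(p' i)))
      * spectralMat U p = spectralMat W (fun j => (√(s j))⁻¹)
        * spectralMat U (fun i => √(p i)) * spectralMat U p := by
    rw [← hA, ← hN, map_sum, Finset.sum_mul, Finset.sum_mul]
    refine Finset.sum_congr rfl fun t ht => ?_
    have ht0 := hΛ0 t ht
    rw [map_smul, Matrix.smul_mul, Matrix.smul_mul, resolvent_mul_eq_of_relEntropy_eq ι hU hW hU'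
      hW' hp hs hp' hs' hρ hσ hsupp hsupp' hD (by positivity)]
  set B := spectralMat W' (fun j => (√(s' j))⁻¹) with hB
  set C := spectralMat U' (fun i => √(p' i)) with hC
  set T := spectralMat W (fun j => √(s j)) * ι (B * C) with hT
  set S := spectralMat U (fun i => √(p i)) with hS
  set P := spectralMat U (fun i => if p i = 0 then 0 else 1) with hP
  -- `T` agrees with `√ρ` on the support of `ρ`
  have hTρ : T * spectralMat U p = S * spectralMat U p := by
    rw [hT, Matrix.mul_assoc, hinter, hS, Matrix.mul_assoc, spectralMat_mul hU,
      ← schurMat_mul hW hU, spectralMat_mul_schurMat hW, ← schurMat_right hW hU]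
    refine schurMat_congr _ _ fun j i hji => ?_
    by_cases hpi : p i = 0
    · simp [hpi]
    · have := (hs j).lt_of_ne' (hsupp j i hji hpi)
      have : √(s j) ≠ 0 := by positivity
      field_simp
  have hpinv : spectralMat U p * spectralMat U (fun i => (p i)⁻¹) = P := by
    rw [spectralMat_mul hU, hP]
    congr 1
    ext i
    by_cases h : p i = 0 <;> simp [h]
  have hTP : T * P = S := by
    rw [← hpinv, ← Matrix.mul_assoc, hTρ, Matrix.mul_assoc, hpinv, hS, hP, spectralMat_mul hU]
    congr 1
    ext i
    by_cases h : p i = 0 <;> simp [h]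
  have hPP : P * P = P := by
    rw [hP, spectralMat_mul hU]
    congr 1
    ext i
    by_cases h : p i = 0 <;> simp [h]
  have hPH : Pᴴ = P := conjTranspose_spectralMat _ _
  have hTT : (T * Tᴴ).trace = (spectralMat U p).trace := by
    have hBH : Bᴴ = B := conjTranspose_spectralMat _ _
    have hCH : Cᴴ = C := conjTranspose_spectralMat _ _
    have h1 : T * Tᴴ = spectralMat W (fun j => √(s j)) * (ι (B * spectralMat U' p' * B)
        * spectralMat W (fun j => √(s j))) := by
      rw [hT, conjTranspose_mul, conjTranspose_spectralMat,
        show (ι (B * C))ᴴ = ι (B * C)ᴴ from (map_star ι _).symm, conjTranspose_mul, hBH, hCH,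
        spectralMat_eq_sqrt_mul_sqrt hU' hp', ← hC]
      simp only [map_mul, Matrix.mul_assoc]
    rw [h1, Matrix.trace_mul_comm, Matrix.mul_assoc, ← spectralMat_eq_sqrt_mul_sqrt hW hs, hσ,
      Matrix.mul_assoc, Matrix.mul_assoc, Matrix.trace_mul_comm, Matrix.mul_assoc,
      Matrix.mul_assoc, hB, spectralMat_mul hW', spectralMat_mul hW']
    have h2 : spectralMat U' p' * spectralMat W' (fun i => (√(s' i))⁻¹ * (s' i * (√(s' i))⁻¹))
        = spectralMat U' p' := by
      rw [← conjTranspose_spectralMat U' p', ← conjTranspose_spectralMat W', ← conjTranspose_mul]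
      congr 1
      rw [← schurMat_mul hW' hU', ← schurMat_right hW' hU']
      refine schurMat_congr _ _ fun j i hji => ?_
      by_cases hpi : p' i = 0
      · simp [hpi]
      · have h0 := (hs' j).lt_of_ne' (hsupp' j i hji hpi)
        have h3 : √(s' j) ≠ 0 := by positivity
        have h4 := Real.mul_self_sqrt h0.le
        field_simp
        rw [pow_two, h4]
    rw [h2]
    simpa using (hρ 1).symm
  refine eq_of_mul_projection_eq hPP hPH hTP ?_
  rw [hTT, hS, conjTranspose_spectralMat, ← spectralMat_eq_sqrt_mul_sqrt hU hp]

end Equality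

section PartialTrace

variable {R Q E B : Type*}

lemma trace_one_kronecker_mul [Fintype R] [DecidableEq R] [Fintype B] (X : Matrix B B ℂ)
    (M : Matrix (R × B) (R × B) ℂ) :
    (((1 : Matrix R R ℂ) ⊗ₖ X) * M).trace = (X * ptraceLeft M).trace := by
  simp only [Matrix.trace, Matrix.diag_apply, Matrix.mul_apply, ptraceLeft, Matrix.of_apply,
    Fintype.sum_prod_type, kroneckerMap_apply, Matrix.one_apply, ite_mul, one_mul, zero_mul,
    Finset.mul_sum]
  rw [Finset.sum_comm]
  refine Finset.sum_congr rfl fun b _ => ?_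
  rw [Finset.sum_comm' (t' := Finset.univ) (s' := fun _ => Finset.univ) (by simp)]
  simp [Finset.sum_ite_irrel, Finset.sum_comm (s := (Finset.univ : Finset R))]

lemma posSemidef_ptraceLeft [Fintype R] {M : Matrix (R × B) (R × B) ℂ} (hM : M.PosSemidef) :
    (ptraceLeft M).PosSemidef := by
  have : ptraceLeft M = ∑ r, M.submatrix (fun b => (r, b)) (fun b => (r, b)) := by
    ext x y
    simp [ptraceLeft, Matrix.sum_apply]
  rw [this]
  exact posSemidef_sum _ fun r _ => hM.submatrix _

lemma posSemidef_ptrace3E [Fintype E] {M : Matrix (R × Q × E) (R × Q × E) ℂ}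
    (hM : M.PosSemidef) : (ptrace3E M).PosSemidef := by
  have : ptrace3E M = ∑ e, M.submatrix (fun x : R × Q => (x.1, x.2, e))
      (fun x : R × Q => (x.1, x.2, e)) := by
    ext x y
    simp [ptrace3E, Matrix.sum_apply]
  rw [this]
  exact posSemidef_sum _ fun r _ => hM.submatrix _

/-- The embedding `X ↦ X ⊗ 1_E` of operators on `R ⊗ Q` into operators on `R ⊗ Q ⊗ E`. -/
def tensorOneHom (R Q E : Type*) [Fintype R] [DecidableEq R] [Fintype Q] [DecidableEq Q]
    [Fintype E] [DecidableEq E] :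
    Matrix (R × Q) (R × Q) ℂ →⋆ₐ[ℂ] Matrix (R × Q × E) (R × Q × E) ℂ where
  toFun X := Matrix.of fun x y => if x.2.2 = y.2.2 then X (x.1, x.2.1) (y.1, y.2.1) else 0
  map_one' := by
    ext ⟨r, q, e⟩ ⟨r', q', e'⟩
    simp only [Matrix.of_apply, Matrix.one_apply, Prod.mk.injEq]
    split_ifs <;> simp_all
  map_mul' X Y := by
    ext ⟨r, q, e⟩ ⟨r', q', e'⟩
    simp only [Matrix.of_apply, Matrix.mul_apply, Fintype.sum_prod_type, ite_mul, zero_mul,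
      mul_ite, mul_zero]
    by_cases h : e = e' <;> simp [h]
  map_zero' := by
    ext; simp
  map_add' X Y := by
    ext x y
    simp only [Matrix.of_apply, Matrix.add_apply]
    split_ifs <;> simp
  commutes' c := by
    ext ⟨r, q, e⟩ ⟨r', q', e'⟩
    simp only [Matrix.of_apply, Matrix.algebraMap_matrix_apply, Prod.mk.injEq]
    split_ifs <;> simp_all
  map_star' X := by
    ext x y
    simp only [Matrix.of_apply, Matrix.star_apply, eq_comm (a := x.2.2)]
    split_ifs <;> simp

lemma tensorOneHom_apply [Fintype R] [DecidableEq R] [Fintype Q] [DecidableEq Q]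
    [Fintype E] [DecidableEq E] (X : Matrix (R × Q) (R × Q) ℂ) (x y : R × Q × E) :
    tensorOneHom R Q E X x y = if x.2.2 = y.2.2 then X (x.1, x.2.1) (y.1, y.2.1) else 0 :=
  rfl

lemma trace_tensorOneHom_mul [Fintype R] [DecidableEq R] [Fintype Q] [DecidableEq Q]
    [Fintype E] [DecidableEq E] (X : Matrix (R × Q) (R × Q) ℂ)
    (M : Matrix (R × Q × E) (R × Q × E) ℂ) :
    (tensorOneHom R Q E X * M).trace = (X * ptrace3E M).trace := by
  simp only [Matrix.trace, Matrix.diag_apply, Matrix.mul_apply, Fintype.sum_prod_type,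
    tensorOneHom_apply, ptrace3E, Matrix.of_apply, Finset.mul_sum, ite_mul, zero_mul,
    Finset.sum_ite_eq, Finset.mem_univ, if_true]
  refine Finset.sum_congr rfl fun r _ => Finset.sum_congr rfl fun q _ => ?_
  rw [Finset.sum_comm]
  refine Finset.sum_congr rfl fun r' _ => ?_
  rw [Finset.sum_comm]

lemma tensorOneHom_one_kronecker [Fintype R] [DecidableEq R] [Fintype Q] [DecidableEq Q]
    [Fintype E] [DecidableEq E] (Y : Matrix Q Q ℂ) :
    tensorOneHom R Q E ((1 : Matrix R R ℂ) ⊗ₖ Y)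
      = (1 : Matrix R R ℂ) ⊗ₖ (Y ⊗ₖ (1 : Matrix E E ℂ)) := by
  ext ⟨r, q, e⟩ ⟨r', q', e'⟩
  simp only [tensorOneHom_apply, kroneckerMap_apply, Matrix.one_apply]
  split_ifs <;> simp

lemma ptrace3E_one_kronecker [DecidableEq R] [Fintype E] (M : Matrix (Q × E) (Q × E) ℂ) :
    ptrace3E ((1 : Matrix R R ℂ) ⊗ₖ M) = (1 : Matrix R R ℂ) ⊗ₖ ptraceRight M := by
  ext x y
  simp [ptrace3E, ptraceRight, kroneckerMap_apply, Finset.mul_sum]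

lemma ptraceRight_ptraceLeft [Fintype R] [Fintype E] (M : Matrix (R × Q × E) (R × Q × E) ℂ) :
    ptraceRight (ptraceLeft M) = ptraceLeft (ptrace3E M) := by
  ext x y
  simp only [ptraceRight, ptraceLeft, ptrace3E, Matrix.of_apply]
  exact Finset.sum_comm

lemma trace_ptraceRight [Fintype Q] [Fintype E] (M : Matrix (Q × E) (Q × E) ℂ) :
    (ptraceRight M).trace = M.trace := by
  simp [Matrix.trace, ptraceRight, Fintype.sum_prod_type]

lemma ptraceRight_smul [Fintype E] (c : ℂ) (M : Matrix (Q × E) (Q × E) ℂ) :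
    ptraceRight (c • M) = c • ptraceRight M := by
  ext x y
  simp [ptraceRight, Finset.mul_sum]

lemma ptraceRight_kronecker_one_mul_mul [Fintype Q] [Fintype E] [DecidableEq E]
    (B C : Matrix Q Q ℂ) (M : Matrix (Q × E) (Q × E) ℂ) :
    ptraceRight ((B ⊗ₖ (1 : Matrix E E ℂ)) * M * (C ⊗ₖ (1 : Matrix E E ℂ)))
      = B * ptraceRight M * C := by
  ext x y
  simp only [ptraceRight, Matrix.of_apply, Matrix.mul_apply, Fintype.sum_prod_type,
    kroneckerMap_apply, Matrix.one_apply, mul_ite, mul_one, mul_zero, ite_mul, zero_mul,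
    Finset.sum_ite_eq, Finset.sum_ite_eq', Finset.mem_univ, if_true, Finset.mul_sum,
    Finset.sum_mul]
  rw [Finset.sum_comm]
  refine Finset.sum_congr rfl fun q _ => ?_
  rw [Finset.sum_comm]

lemma trace_mul_kronecker_one [Fintype Q] [Fintype E] [DecidableEq E]
    (M : Matrix (Q × E) (Q × E) ℂ) (X : Matrix Q Q ℂ) :
    (M * (X ⊗ₖ (1 : Matrix E E ℂ))).trace = (ptraceRight M * X).trace := by
  classical
  have := ptraceRight_kronecker_one_mul_mul (E := E) 1 X M
  rw [one_kronecker_one, Matrix.one_mul, Matrix.one_mul] at this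
  rw [← this, trace_ptraceRight]

/-- Conjugation on the second factor commutes with steering from the first. -/
lemma ptraceLeft_kronecker_one_mul_conj [Fintype R] [DecidableEq R] [Fintype B] [DecidableEq B]
    (P : Matrix R R ℂ) (G H : Matrix B B ℂ) (M : Matrix (R × B) (R × B) ℂ) :
    ptraceLeft ((P ⊗ₖ (1 : Matrix B B ℂ)) * (((1 : Matrix R R ℂ) ⊗ₖ G) * M
      * ((1 : Matrix R R ℂ) ⊗ₖ H))) = G * ptraceLeft ((P ⊗ₖ (1 : Matrix B B ℂ)) * M) * H := by
  have hcomm : (P ⊗ₖ (1 : Matrix B B ℂ)) * (((1 : Matrix R R ℂ) ⊗ₖ G) * M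
      * ((1 : Matrix R R ℂ) ⊗ₖ H)) = ((1 : Matrix R R ℂ) ⊗ₖ G)
        * ((P ⊗ₖ (1 : Matrix B B ℂ)) * M) * ((1 : Matrix R R ℂ) ⊗ₖ H) := by
    rw [← Matrix.mul_assoc, ← Matrix.mul_assoc, ← Matrix.mul_assoc, ← mul_kronecker_mul,
      ← mul_kronecker_mul]
    simp
  rw [hcomm]
  generalize (P ⊗ₖ (1 : Matrix B B ℂ)) * M = L
  ext x y
  simp only [ptraceLeft, Matrix.of_apply, Matrix.mul_apply, Fintype.sum_prod_type,
    kroneckerMap_apply, Matrix.one_apply, mul_ite, mul_zero, ite_mul, zero_mul, one_mul,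
    Finset.sum_ite_irrel, Finset.sum_const_zero,
    Finset.sum_ite_eq, Finset.sum_ite_eq', Finset.mem_univ, if_true, Finset.mul_sum,
    Finset.sum_mul]
  rw [Finset.sum_comm]
  refine Finset.sum_congr rfl fun q _ => ?_
  rw [Finset.sum_comm]

lemma ptraceLeft_kronecker_one_mul_tensorOneHom [Fintype R] [DecidableEq R] [Fintype Q]
    [DecidableEq Q] [Fintype E] [DecidableEq E] (P : Matrix R R ℂ)
    (X : Matrix (R × Q) (R × Q) ℂ) :
    ptraceLeft ((P ⊗ₖ (1 : Matrix (Q × E) (Q × E) ℂ)) * tensorOneHom R Q E X)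
      = ptraceLeft ((P ⊗ₖ (1 : Matrix Q Q ℂ)) * X) ⊗ₖ (1 : Matrix E E ℂ) := by
  ext ⟨q, e⟩ ⟨q', e'⟩
  simp only [ptraceLeft, Matrix.of_apply, Matrix.mul_apply, kroneckerMap_apply, Matrix.one_apply,
    mul_ite, mul_one, mul_zero, ite_mul, zero_mul, tensorOneHom_apply,
    Fintype.sum_prod_type (α₁ := R), Finset.sum_ite_eq, Finset.mem_univ, if_true]
  have key : ∀ f : Q × E → ℂ, ∑ z, (if z.2 = e' then if (q, e) = z then f z else 0 else 0)
      = if e = e' then f (q, e) else 0 := by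
    intro f
    rw [Finset.sum_eq_single (q, e)]
    · simp
    · intro z _ hz
      simp [hz.symm]
    · simp
  simp only [key]
  by_cases h : e = e'
  · simp only [h, if_true]
  · simp only [h, if_false, Finset.sum_const_zero]

lemma ptraceRight_kronecker_one_mul [Fintype R] [Fintype Q] [DecidableEq Q]
    [Fintype E] [DecidableEq E] (P : Matrix R R ℂ) (M : Matrix (R × Q × E) (R × Q × E) ℂ) :
    ptraceRight (ptraceLeft ((P ⊗ₖ (1 : Matrix (Q × E) (Q × E) ℂ)) * M))
      = ptraceLeft ((P ⊗ₖ (1 : Matrix Q Q ℂ)) * ptrace3E M) := by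
  ext q q'
  simp only [ptraceLeft, ptraceRight, ptrace3E, Matrix.of_apply, Matrix.mul_apply,
    kroneckerMap_apply, Matrix.one_apply, mul_ite, mul_one, mul_zero, ite_mul, zero_mul,
    Fintype.sum_prod_type (α₁ := R), Finset.sum_ite_eq, Finset.mem_univ, if_true, Finset.mul_sum,
    Finset.sum_ite_irrel, Finset.sum_const_zero]
  rw [Finset.sum_comm]
  refine Finset.sum_congr rfl fun q _ => ?_
  rw [Finset.sum_comm]

end PartialTrace

section Kraus

variable {A B κ : Type*} [Fintype A] [Fintype B] [Fintype κ]

/-- The map `X ↦ ∑ₖ Kₖ X Kₖᴴ` with Kraus operators `K`. -/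
def krausMap (K : κ → Matrix B A ℂ) : Matrix A A ℂ →ₗ[ℂ] Matrix B B ℂ where
  toFun X := ∑ k, K k * X * (K k)ᴴ
  map_add' X Y := by simp [Matrix.mul_add, Matrix.add_mul, Finset.sum_add_distrib]
  map_smul' c X := by simp [Finset.smul_sum]

lemma isCPMap_krausMap (K : κ → Matrix B A ℂ) : IsCPMap (krausMap K) := by
  intro m M hM
  have : idTensor (Fin m) (krausMap K) M
      = ∑ k, ((1 : Matrix (Fin m) (Fin m) ℂ) ⊗ₖ K k) * M
        * ((1 : Matrix (Fin m) (Fin m) ℂ) ⊗ₖ K k)ᴴ := by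
    ext ⟨i, b⟩ ⟨i', b'⟩
    simp only [idTensor, krausMap, LinearMap.coe_mk, AddHom.coe_mk, Matrix.of_apply,
      Matrix.sum_apply]
    refine Finset.sum_congr rfl fun k _ => ?_
    simp [Matrix.mul_apply, Fintype.sum_prod_type, kroneckerMap_apply, Matrix.one_apply,
      Finset.sum_ite_irrel, apply_ite]
  rw [this]
  exact posSemidef_sum _ fun k _ => hM.mul_mul_conjTranspose_same _

lemma isCPTP_krausMap [DecidableEq A] (K : κ → Matrix B A ℂ) (hK : ∑ k, (K k)ᴴ * K k = 1) :
    IsCPTP (krausMap K) := by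
  refine ⟨isCPMap_krausMap K, fun X => ?_⟩
  calc (krausMap K X).trace = ∑ k, ((K k)ᴴ * K k * X).trace := by
        simp only [krausMap, LinearMap.coe_mk, AddHom.coe_mk, trace_sum]
        refine Finset.sum_congr rfl fun k _ => ?_
        rw [Matrix.trace_mul_comm, Matrix.mul_assoc]
    _ = X.trace := by rw [← trace_sum, ← Finset.sum_mul, hK, Matrix.one_mul]

variable {Q E Q' E' : Type*}

/-- The block of `H : Q ⊗ E → Q' ⊗ E'` with fixed environment indices. -/
def envBlock (H : Matrix (Q' × E') (Q × E) ℂ) (x : E' × E) : Matrix Q' Q ℂ :=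
  Matrix.of fun q' q => H (q', x.1) (q, x.2)

lemma sum_envBlock_mul_mul [Fintype Q] [Fintype E] [DecidableEq E] [Fintype E']
    (H : Matrix (Q' × E') (Q × E) ℂ) (X : Matrix Q Q ℂ) :
    ∑ x, envBlock H x * X * (envBlock H x)ᴴ
      = ptraceRight (H * (X ⊗ₖ (1 : Matrix E E ℂ)) * Hᴴ) := by
  ext a b
  simp only [ptraceRight, envBlock, Matrix.sum_apply, Matrix.mul_apply, Matrix.of_apply,
    Matrix.conjTranspose_apply, Fintype.sum_prod_type, kroneckerMap_apply, Matrix.one_apply,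
    mul_ite, mul_one, mul_zero, Finset.sum_ite_eq', Finset.mem_univ, if_true]
  refine Finset.sum_congr rfl fun e' _ => ?_
  rw [Finset.sum_comm]

lemma sum_conjTranspose_envBlock_mul [Fintype E] [Fintype Q'] [Fintype E']
    (H : Matrix (Q' × E') (Q × E) ℂ) :
    ∑ x, (envBlock H x)ᴴ * envBlock H x = ptraceRight (Hᴴ * H) := by
  ext a b
  simp only [ptraceRight, envBlock, Matrix.sum_apply, Matrix.mul_apply, Matrix.of_apply,
    Matrix.conjTranspose_apply, Fintype.sum_prod_type]
  rw [Finset.sum_comm]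
  refine Finset.sum_congr rfl fun e _ => ?_
  rw [Finset.sum_comm]

/-- The rank-one Kraus operator `|q₀⟩⟨q| D`. -/
def resetBlock [DecidableEq Q'] (q₀ : Q') (D : Matrix Q Q ℂ) (q : Q) : Matrix Q' Q ℂ :=
  Matrix.of fun q' x => if q' = q₀ then D q x else 0

lemma sum_conjTranspose_resetBlock_mul [Fintype Q] [Fintype Q'] [DecidableEq Q'] (q₀ : Q')
    (D : Matrix Q Q ℂ) :
    ∑ q, (resetBlock q₀ D q)ᴴ * resetBlock q₀ D q = Dᴴ * D := by
  ext a b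
  simp [resetBlock, Matrix.sum_apply, Matrix.mul_apply, apply_ite]

lemma sum_resetBlock_mul_mul [Fintype Q] [DecidableEq Q'] (q₀ : Q') (D X : Matrix Q Q ℂ) :
    ∑ q, resetBlock q₀ D q * X * (resetBlock q₀ D q)ᴴ
      = (Dᴴ * D * X).trace • Matrix.single q₀ q₀ (1 : ℂ) := by
  have h : (Dᴴ * D * X).trace = (D * X * Dᴴ).trace := by
    rw [Matrix.trace_mul_comm (D * X), Matrix.mul_assoc]
  rw [h]
  ext a b
  simp only [resetBlock, Matrix.sum_apply, Matrix.mul_apply, Matrix.of_apply,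
    Matrix.conjTranspose_apply, Matrix.smul_apply, Matrix.single_apply, Matrix.trace,
    Matrix.diag_apply, smul_eq_mul]
  by_cases ha : a = q₀ <;> by_cases hb : b = q₀ <;>
    simp [ha, hb, eq_comm (a := q₀)]

end Kraus

section Markov

lemma one_kronecker_conjTranspose_mul_self {R B : Type*} [Fintype R] [DecidableEq R] [Fintype B]
    [DecidableEq B] {V : Matrix B B ℂ} (hV : Vᴴ * V = 1) :
    ((1 : Matrix R R ℂ) ⊗ₖ V)ᴴ * ((1 : Matrix R R ℂ) ⊗ₖ V) = 1 := by
  rw [conjTranspose_kronecker, ← mul_kronecker_mul, hV]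
  simp

lemma spectralMat_one_kronecker {R B : Type*} [Fintype R] [DecidableEq R] [Fintype B]
    [DecidableEq B] (V : Matrix B B ℂ) (f : B → ℝ) :
    spectralMat ((1 : Matrix R R ℂ) ⊗ₖ V) (fun j => f j.2)
      = (1 : Matrix R R ℂ) ⊗ₖ spectralMat V f := by
  have : diagonal (fun j : R × B => (f j.2 : ℂ))
      = (1 : Matrix R R ℂ) ⊗ₖ diagonal (fun b => (f b : ℂ)) := by
    rw [← diagonal_one, diagonal_kronecker_diagonal]
    simp
  simp only [spectralMat]
  rw [this, conjTranspose_kronecker, ← mul_kronecker_mul, ← mul_kronecker_mul]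
  simp

lemma exists_spectralMat_eq {n : Type*} [Fintype n] [DecidableEq n] {M : Matrix n n ℂ}
    (hM : M.PosSemidef) : ∃ (U : Matrix n n ℂ) (p : n → ℝ), Uᴴ * U = 1 ∧ (∀ i, 0 ≤ p i) ∧
      M = spectralMat U p ∧ vnEntropy M = -∑ i, p i * Real.log (p i) := by
  refine ⟨hM.isHermitian.eigenvectorUnitary, hM.isHermitian.eigenvalues, ?_,
    hM.eigenvalues_nonneg, ?_, ?_⟩
  · rw [← star_eq_conjTranspose]
    exact Unitary.coe_star_mul_self _
  · exact hM.isHermitian.spectral_theorem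
  · rw [vnEntropy, dif_pos hM.isHermitian, ← Finset.sum_neg_distrib]
    simp [Real.negMulLog]

section Marginal

variable {R B : Type*} [Fintype R] [DecidableEq R] [Fintype B] [DecidableEq B]
  {U : Matrix (R × B) (R × B) ℂ} {V : Matrix B B ℂ} {p : R × B → ℝ} {s : B → ℝ}

lemma sum_overlap_mul_of_ptraceLeft (hU : Uᴴ * U = 1) (hV : Vᴴ * V = 1)
    (hs : ptraceLeft (spectralMat U p) = spectralMat V s) (a : B → ℝ) :
    ∑ j : R × B, ∑ i, ‖(((1 : Matrix R R ℂ) ⊗ₖ V)ᴴ * U) j i‖ ^ 2 * (a j.2 * p i)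
      = ∑ b, a b * s b := by
  have hW := one_kronecker_conjTranspose_mul_self (R := R) hV
  have h := trace_schurMat_mul_spectralMat (W := (1 : Matrix R R ℂ) ⊗ₖ V) hU
    (fun j _ => a j.2) p
  have h1 : schurMat ((1 : Matrix R R ℂ) ⊗ₖ V) U (fun j _ => a j.2)
      = spectralMat ((1 : Matrix R R ℂ) ⊗ₖ V) (fun j => a j.2) := by
    have := schurMat_mul hW hU (fun j => a j.2) (fun _ => 1)
    rw [spectralMat_one hU, Matrix.mul_one] at this
    simpa using this
  rw [h1, conjTranspose_spectralMat, spectralMat_one_kronecker, trace_one_kronecker_mul, hs,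
    spectralMat_mul hV, trace_spectralMat hV] at h
  exact (Complex.ofReal_injective h).symm

lemma ne_zero_of_overlap_ne_zero (hU : Uᴴ * U = 1) (hV : Vᴴ * V = 1) (hp : ∀ i, 0 ≤ p i)
    (hs : ptraceLeft (spectralMat U p) = spectralMat V s) (j i : R × B)
    (hji : (((1 : Matrix R R ℂ) ⊗ₖ V)ᴴ * U) j i ≠ 0) (hpi : p i ≠ 0) : s j.2 ≠ 0 := by
  intro hsj
  have h := sum_overlap_mul_of_ptraceLeft hU hV hs (fun b => if s b = 0 then 1 else 0)
  rw [Finset.sum_eq_zero (s := Finset.univ) (f := fun b => (if s b = 0 then 1 else 0) * s b)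
    (fun b _ => by by_cases hb : s b = 0 <;> simp [hb])] at h
  have hnn : ∀ j i : R × B, 0 ≤ ‖(((1 : Matrix R R ℂ) ⊗ₖ V)ᴴ * U) j i‖ ^ 2
      * ((if s j.2 = 0 then 1 else 0) * p i) := fun j i => by
    have := hp i
    positivity
  rw [Finset.sum_eq_zero_iff_of_nonneg fun j _ => Finset.sum_nonneg fun i _ => hnn j i] at h
  have h1 := h j (Finset.mem_univ _)
  rw [Finset.sum_eq_zero_iff_of_nonneg fun i _ => hnn j i] at h1
  have h2 := h1 i (Finset.mem_univ _)
  simp only [hsj, if_true, one_mul] at h2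
  rcases mul_eq_zero.1 h2 with h3 | h3
  · exact hji (by simpa using h3)
  · exact hpi h3

/-- The relative entropy of `M` with respect to `1 ⊗ M_B` is `S(M_B) - S(M)`. -/
lemma relEntropy_ptraceLeft (hU : Uᴴ * U = 1) (hV : Vᴴ * V = 1)
    (hs : ptraceLeft (spectralMat U p) = spectralMat V s) :
    ∑ j : R × B, ∑ i, ‖(((1 : Matrix R R ℂ) ⊗ₖ V)ᴴ * U) j i‖ ^ 2 * p i
        * (Real.log (p i) - Real.log (s j.2))
      = ∑ i, p i * Real.log (p i) - ∑ b, s b * Real.log (s b) := by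
  have hW := one_kronecker_conjTranspose_mul_self (R := R) hV
  have h1 := sum_overlap_mul_of_ptraceLeft hU hV hs (fun b => Real.log (s b))
  have h2 := trace_schurMat_mul_spectralMat (W := (1 : Matrix R R ℂ) ⊗ₖ V) hU
    (fun _ i => Real.log (p i)) p
  rw [schurMat_right hW hU, conjTranspose_spectralMat, spectralMat_mul hU,
    trace_spectralMat hU] at h2
  have h3 := Complex.ofReal_injective h2
  simp only [mul_comm (p _) (Real.log _), mul_comm (s _) (Real.log _)]
  rw [h3, ← h1, ← Finset.sum_sub_distrib]
  refine Finset.sum_congr rfl fun j _ => ?_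
  rw [← Finset.sum_sub_distrib]
  refine Finset.sum_congr rfl fun i _ => ?_
  ring

end Marginal

/-- A state with vanishing conditional mutual information is recovered from its `RQ` marginal by
an operation on `Q` alone. -/
theorem exists_recovery_of_condMutualInfo_eq_zero {R Q E : Type*} [Fintype R] [DecidableEq R]
    [Fintype Q] [DecidableEq Q] [Fintype E] [DecidableEq E]
    {ρ : Matrix (R × Q × E) (R × Q × E) ℂ} (hρ : ρ.PosSemidef) (hI : condMutualInfo ρ = 0) :
    ∃ (G : Matrix (Q × E) (Q × E) ℂ) (D : Matrix Q Q ℂ),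
      ρ = ((1 : Matrix R R ℂ) ⊗ₖ G) * tensorOneHom R Q E (ptrace3E ρ)
        * ((1 : Matrix R R ℂ) ⊗ₖ Gᴴ) ∧
      ptraceRight (Gᴴ * G) + Dᴴ * D = 1 := by
  have hρRQ := posSemidef_ptrace3E hρ
  obtain ⟨U, p, hU, hp, hρU, hSρ⟩ := exists_spectralMat_eq hρ
  obtain ⟨V, s, hV, hs, hρV, hSV⟩ := exists_spectralMat_eq (posSemidef_ptraceLeft hρ)
  obtain ⟨U', p', hU', hp', hρU', hSρ'⟩ := exists_spectralMat_eq hρRQ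
  obtain ⟨V', s', hV', hs', hρV', hSV'⟩ := exists_spectralMat_eq (posSemidef_ptraceLeft hρRQ)
  have hm : ptraceLeft (spectralMat U p) = spectralMat V s := by rw [← hρU, hρV]
  have hm' : ptraceLeft (spectralMat U' p') = spectralMat V' s' := by rw [← hρU', hρV']
  have hQ : ptraceRight (spectralMat V s) = spectralMat V' s' := by
    rw [← hρV, ← hρV', ptraceRight_ptraceLeft]
  have key := sqrt_eq_of_relEntropy_eq (tensorOneHom R Q E) hU
    (one_kronecker_conjTranspose_mul_self (R := R) hV) hU'
    (one_kronecker_conjTranspose_mul_self (R := R) hV') hp (fun j => hs j.2) hp' (fun j => hs' j.2)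
    (fun X => by rw [trace_tensorOneHom_mul, ← hρU, hρU'])
    (fun X => by
      rw [trace_tensorOneHom_mul, spectralMat_one_kronecker, spectralMat_one_kronecker,
        ptrace3E_one_kronecker, hQ])
    (ne_zero_of_overlap_ne_zero hU hV hp hm) (ne_zero_of_overlap_ne_zero hU' hV' hp' hm')
    (by
      rw [relEntropy_ptraceLeft hU hV hm, relEntropy_ptraceLeft hU' hV' hm']
      rw [condMutualInfo, hSρ, hSV, hSρ', hSV'] at hI
      linarith)
  rw [spectralMat_one_kronecker V (fun b => √(s b)),
    spectralMat_one_kronecker V' (fun b => (√(s' b))⁻¹), map_mul, tensorOneHom_one_kronecker,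
    ← Matrix.mul_assoc, ← mul_kronecker_mul, Matrix.mul_one] at key
  set B := spectralMat V' (fun b => (√(s' b))⁻¹) with hB
  set C := spectralMat V (fun b => √(s b)) with hC
  have hBH : Bᴴ = B := conjTranspose_spectralMat _ _
  have hCH : Cᴴ = C := conjTranspose_spectralMat _ _
  refine ⟨C * (B ⊗ₖ (1 : Matrix E E ℂ)),
    spectralMat V' (fun b => if s' b = 0 then 1 else 0), ?_, ?_⟩
  · have h1 : ρ = spectralMat U (fun i => √(p i)) * (spectralMat U (fun i => √(p i)))ᴴ := by
      rw [conjTranspose_spectralMat, ← spectralMat_eq_sqrt_mul_sqrt hU hp, hρU]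
    have hιH : (tensorOneHom R Q E (spectralMat U' fun i => √(p' i)))ᴴ
        = tensorOneHom R Q E (spectralMat U' fun i => √(p' i)) := by
      rw [← star_eq_conjTranspose, ← map_star, star_eq_conjTranspose, conjTranspose_spectralMat]
    rw [hρU', spectralMat_eq_sqrt_mul_sqrt hU' hp', map_mul]
    nth_rewrite 1 [h1]
    rw [← key, conjTranspose_mul, hιH, conjTranspose_kronecker, conjTranspose_one]
    simp only [Matrix.mul_assoc]
  · have h2 : (C * (B ⊗ₖ (1 : Matrix E E ℂ)))ᴴ * (C * (B ⊗ₖ (1 : Matrix E E ℂ)))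
        = (B ⊗ₖ (1 : Matrix E E ℂ)) * spectralMat V s * (B ⊗ₖ (1 : Matrix E E ℂ)) := by
      rw [conjTranspose_mul, conjTranspose_kronecker, conjTranspose_one, hBH, hCH,
        spectralMat_eq_sqrt_mul_sqrt hV hs, ← hC]
      simp only [Matrix.mul_assoc]
    rw [h2, ptraceRight_kronecker_one_mul_mul, hQ, conjTranspose_spectralMat, hB,
      spectralMat_mul hV', spectralMat_mul hV', spectralMat_mul hV', ← spectralMat_one hV']
    simp only [spectralMat, ← Matrix.add_mul, ← Matrix.mul_add, diagonal_add]
    congr 3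
    ext b
    by_cases hb : s' b = 0
    · simp [hb]
    · have h3 : √(s' b) ≠ 0 := by
        rw [Real.sqrt_ne_zero (hs' b)]
        exact hb
      have h4 : (√(s' b))⁻¹ * s' b * (√(s' b))⁻¹ = 1 := by
        have := Real.mul_self_sqrt (hs' b)
        field_simp
        rw [pow_two, this]
      rw [h4]
      simp [hb]

end Markov

/-- If `ρ_RQE` is a Markov state (`I(R;E|Q)_ρ = 0`), then for every joint
system-environment isometric evolution there is a single CPTP map describing the reduced
dynamics on all states of the steered family of `ρ_RQE`. -/
theorem stmt5 {R Q E : Type} [Fintype R] [DecidableEq R] [Fintype Q] [DecidableEq Q]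
    [Fintype E] [DecidableEq E]
    (ρ : Matrix (R × Q × E) (R × Q × E) ℂ) (hρ : IsState ρ)
    (hMarkov : condMutualInfo ρ = 0) :
    ∀ (Q' E' : Type) [Fintype Q'] [DecidableEq Q'] [Fintype E'] [DecidableEq E']
      (V : Matrix (Q' × E') (Q × E) ℂ), Vᴴ * V = 1 →
      ∃ ℰ : Matrix Q Q ℂ →ₗ[ℂ] Matrix Q' Q' ℂ, IsCPTP ℰ ∧
        ∀ ω ∈ steered ρ, ptraceRight (V * ω * Vᴴ) = ℰ (ptraceRight ω) := by
  intro Q' E' _ _ _ _ V hV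
  obtain ⟨G, D, hG, hD⟩ := exists_recovery_of_condMutualInfo_eq_zero hρ.1 hMarkov
  have hne : Nonempty Q' := by
    by_contra hemp
    rw [not_nonempty_iff] at hemp
    have h0 : (1 : Matrix (Q × E) (Q × E) ℂ) = 0 := by
      rw [← hV, Subsingleton.elim V 0, Matrix.mul_zero]
    have h1 : ρ = 0 := by
      have : ρ * ((1 : Matrix R R ℂ) ⊗ₖ (1 : Matrix (Q × E) (Q × E) ℂ)) = 0 := by
        rw [h0, kronecker_zero, Matrix.mul_zero]
      rwa [one_kronecker_one, Matrix.mul_one] at this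
    have := hρ.2
    simp [h1] at this
  obtain ⟨q₀⟩ := hne
  have hVG : (V * G)ᴴ * (V * G) = Gᴴ * G := by
    rw [conjTranspose_mul, Matrix.mul_assoc, ← Matrix.mul_assoc Vᴴ, hV, Matrix.one_mul]
  refine ⟨krausMap (Sum.elim (envBlock (V * G)) (resetBlock q₀ D)), ?_, ?_⟩
  · refine isCPTP_krausMap _ ?_
    rw [Fintype.sum_sum_type]
    simp only [Sum.elim_inl, Sum.elim_inr]
    rw [sum_conjTranspose_envBlock_mul, sum_conjTranspose_resetBlock_mul, hVG, hD]
  · rintro ω ⟨P, -, -, hω⟩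
    have hωG : ω = G * (ptraceRight ω ⊗ₖ (1 : Matrix E E ℂ)) * Gᴴ := by
      have h1 : ptraceLeft ((P ⊗ₖ (1 : Matrix (Q × E) (Q × E) ℂ)) * ρ)
          = G * (ptraceRight (ptraceLeft ((P ⊗ₖ (1 : Matrix (Q × E) (Q × E) ℂ)) * ρ))
            ⊗ₖ (1 : Matrix E E ℂ)) * Gᴴ := by
        rw [ptraceRight_kronecker_one_mul, ← ptraceLeft_kronecker_one_mul_tensorOneHom,
          ← ptraceLeft_kronecker_one_mul_conj, ← hG]
      generalize ptraceLeft ((P ⊗ₖ (1 : Matrix (Q × E) (Q × E) ℂ)) * ρ) = L at h1 hω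
      rw [hω, ptraceRight_smul, smul_kronecker, Matrix.mul_smul, Matrix.smul_mul, ← h1]
    have htr : (Dᴴ * D * ptraceRight ω).trace = 0 := by
      have h1 : ω.trace = (ptraceRight (Gᴴ * G) * ptraceRight ω).trace := by
        rw [← trace_mul_kronecker_one, Matrix.mul_assoc, Matrix.trace_mul_comm Gᴴ, ← hωG]
      rw [eq_sub_iff_add_eq'.2 hD, Matrix.sub_mul, Matrix.one_mul, trace_sub,
        trace_ptraceRight, h1, sub_self]
    simp only [krausMap, LinearMap.coe_mk, AddHom.coe_mk, Fintype.sum_sum_type, Sum.elim_inl,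
      Sum.elim_inr]
    rw [sum_envBlock_mul_mul, sum_resetBlock_mul_mul, htr, zero_smul, add_zero]
    nth_rewrite 1 [hωG]
    rw [conjTranspose_mul]
    simp only [Matrix.mul_assoc]
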